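/- Let K ⊂ ℝ² be a symmetric convex body with vol₂(K) = 1 and let N ≥ 2 be an integer. For r ≥ 0 and 0 ≤ θ < 2π, let ℓ(r,θ) = vol₁({(x,y) : (x,y)·(cos θ, sin θ) = r} ∩ K) and A(r,θ) = vol₂({(x,y) : |(x,y)·(cos θ, sin θ)| ≤ r} ∩ K). Then 𝔼 V_{K,N} = 1 − (N/3) ∫₀^{2π} ∫₀^∞ A(r,θ)^{N−1} ℓ(r,θ)³ dr dθ. -/

import Mathlib

open MeasureTheory Set

noncomputable section

variable {E : Type*} [NormedAddCommGroup E] [InnerProductSpace ℝ E]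

/-- A symmetric convex body: a compact convex set with nonempty interior with `K = -K`. -/
def IsSymConvexBody (K : Set E) : Prop :=
  IsCompact K ∧ Convex ℝ K ∧ (interior K).Nonempty ∧ K = -K

/-- `momentU n N K p = 𝔼 U_{K,N}^p`, the `p`-th moment of the normalized volume of the
convex hull of `N` independent uniform random points in `K ⊆ ℝⁿ`. -/
def momentU (n N : ℕ) (K : Set (EuclideanSpace ℝ (Fin n))) (p : ℝ) : ℝ :=
  (∫ x : Fin N → EuclideanSpace ℝ (Fin n) in {x | ∀ i, x i ∈ K},
      ((volume (convexHull ℝ (Set.range x))).toReal / (volume K).toReal) ^ p) /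
    (volume K).toReal ^ N

/-- `momentV n N K p = 𝔼 V_{K,N}^p`, the `p`-th moment of the normalized volume of the
symmetric convex hull `conv{±x₁, …, ±x_N}` of `N` independent uniform random points
in `K ⊆ ℝⁿ`. -/
def momentV (n N : ℕ) (K : Set (EuclideanSpace ℝ (Fin n))) (p : ℝ) : ℝ :=
  (∫ x : Fin N → EuclideanSpace ℝ (Fin n) in {x | ∀ i, x i ∈ K},
      ((volume (convexHull ℝ (Set.range x ∪ -Set.range x))).toReal / (volume K).toReal) ^ p) /
    (volume K).toReal ^ N

/-!
The expected area of the symmetric hull is `volume K` minus the integral over `y ∈ K` of the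
probability that the hull misses `y`. For fixed `y ≠ 0` the hull misses `y` exactly when some line
through `y` leaves all the points `±xₖ` strictly on the side of the origin. After normalizing, the
admissible directions of such a line form an intersection of intervals, one for each `k`;
splitting according to the `k` whose interval has the largest left endpoint makes that line pass
through `y` and `±xₖ`, and the other points then lie in the slab between this line and its
reflection in the origin. It remains to integrate the `n`-th power of the slab's area over pairs
`(y, p)` of points of `K`. The Blaschke–Petkantschin formula parametrizes the pair by the line
through it and two positions on that line, and the slab depends on the line only. A chord of length
`ℓ = b - a` contributes the integral of `(b - t) ^ 2 / 2` over `[a, b]`, which is `ℓ ^ 3 / 6`.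
-/

open Real
open scoped ENNReal

section RandomIntervals

variable {ι β : Type*} [LinearOrder β]

lemma exists_forall_mem_Ico_of_forall_mem_Ioo [Finite ι] [Nonempty ι] {a b : ι → β} {c : β}
    (hc : ∀ k, c ∈ Ioo (a k) (b k)) : ∃ j, ∀ k, a j ∈ Ico (a k) (b k) := by
  obtain ⟨j, hj⟩ := Finite.exists_max a
  exact ⟨j, fun k => ⟨hj k, (hc j).1.trans (hc k).2⟩⟩

lemma exists_forall_mem_Ioo_of_forall_ne_mem_Ioo [Finite ι] [DenselyOrdered β] {a b : ι → β}
    {j : ι} (hj : a j < b j) (h : ∀ k ≠ j, a j ∈ Ioo (a k) (b k)) :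
    ∃ c, ∀ k, c ∈ Ioo (a k) (b k) := by
  have : Nonempty ι := ⟨j⟩
  obtain ⟨m, hm⟩ := Finite.exists_min b
  have hjm : a j < b m := by
    rcases eq_or_ne m j with rfl | hmj
    exacts [hj, (h m hmj).2]
  obtain ⟨c, hac, hcb⟩ := exists_between hjm
  refine ⟨c, fun k => ⟨?_, hcb.trans_le (hm k)⟩⟩
  rcases eq_or_ne k j with rfl | hkj
  exacts [hac, (h k hkj).1.trans hac]

variable {α : Type*} [MeasurableSpace α]

lemma measurableSet_setOf_forall_succAbove {n : ℕ} {R : α → α → Prop}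
    (hR : MeasurableSet {z : α × α | R z.1 z.2}) (j : Fin (n + 1)) :
    MeasurableSet {x : Fin (n + 1) → α | ∀ i, R (x j) (x (j.succAbove i))} := by
  have hpair (i : Fin n) : Measurable fun x : Fin (n + 1) → α => (x j, x (j.succAbove i)) := by
    fun_prop
  rw [ofPred_forall]
  exact .iInter fun i => hpair i hR

lemma pi_setOf_forall_succAbove (μ : Measure α) [SigmaFinite μ] {n : ℕ} {R : α → α → Prop}
    (hR : MeasurableSet {z : α × α | R z.1 z.2}) (j : Fin (n + 1)) :
    Measure.pi (fun _ => μ) {x | ∀ i, R (x j) (x (j.succAbove i))} =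
      ∫⁻ p, μ {q | R p q} ^ n ∂μ := by
  have hsplit := measurePreserving_piFinSuccAbove (fun _ : Fin (n + 1) => μ) j
  have hT : MeasurableSet {z : α × (Fin n → α) | ∀ i, R z.1 (z.2 i)} := by
    have hpair (i : Fin n) : Measurable fun z : α × (Fin n → α) => (z.1, z.2 i) := by fun_prop
    rw [ofPred_forall]
    exact .iInter fun i => hpair i hR
  calc
    _ = (μ.prod (Measure.pi fun _ => μ)) {z : α × (Fin n → α) | ∀ i, R z.1 (z.2 i)} :=
      hsplit.measure_preimage hT.nullMeasurableSet
    _ = ∫⁻ p, Measure.pi (fun _ : Fin n => μ) (univ.pi fun _ => {q | R p q}) ∂μ := by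
      rw [Measure.prod_apply hT]
      congr! with p
      ext z
      simp
    _ = _ := by simp only [Measure.pi_pi, Finset.prod_const, Finset.card_univ, Fintype.card_fin]

lemma sum_pi_setOf_forall_succAbove (μ : Measure α) [SigmaFinite μ] {n : ℕ} {R : α → α → Prop}
    (hR : MeasurableSet {z : α × α | R z.1 z.2}) :
    ∑ j : Fin (n + 1), Measure.pi (fun _ => μ) {x | ∀ i, R (x j) (x (j.succAbove i))} =
      (n + 1 : ℕ) * ∫⁻ p, μ {q | R p q} ^ n ∂μ := by
  simp only [pi_setOf_forall_succAbove μ hR, Finset.sum_const, Finset.card_univ, Fintype.card_fin,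
    nsmul_eq_mul]

lemma measure_setOf_mem_Ico_eq_Ioo {μ : Measure α} {s t : α → β}
    (hnull : ∀ c, μ (s ⁻¹' {c}) = 0) (c : β) :
    μ {q | c ∈ Ico (s q) (t q)} = μ {q | c ∈ Ioo (s q) (t q)} := by
  refine measure_congr ?_
  filter_upwards [measure_eq_zero_iff_ae_notMem.1 (hnull c)] with q hq
  exact propext (and_congr_left fun _ => ⟨fun h => h.lt_of_ne hq, le_of_lt⟩)

variable [TopologicalSpace β] [OrderClosedTopology β] [SecondCountableTopology β]
  [MeasurableSpace β] [OpensMeasurableSpace β] {μ : Measure α} [SigmaFinite μ] {s t : α → β}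

lemma pi_setOf_exists_forall_mem_Ioo_le (hs : Measurable s) (ht : Measurable t) (n : ℕ) :
    Measure.pi (fun _ : Fin (n + 1) => μ) {x | ∃ c, ∀ k, c ∈ Ioo (s (x k)) (t (x k))} ≤
      (n + 1 : ℕ) * ∫⁻ p, μ {q | s p ∈ Ico (s q) (t q)} ^ n ∂μ := by
  have hR : MeasurableSet {z : α × α | s z.1 ∈ Ico (s z.2) (t z.2)} :=
    (measurableSet_le (hs.comp measurable_snd) (hs.comp measurable_fst)).inter
      (measurableSet_lt (hs.comp measurable_fst) (ht.comp measurable_snd))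
  rw [← sum_pi_setOf_forall_succAbove μ (R := fun p q => s p ∈ Ico (s q) (t q)) hR]
  refine le_trans (measure_mono fun x ⟨c, hc⟩ => mem_iUnion.2 ?_) (measure_iUnion_fintype_le _ _)
  obtain ⟨j, hj⟩ := exists_forall_mem_Ico_of_forall_mem_Ioo hc
  exact ⟨j, fun i => hj _⟩

lemma le_pi_setOf_exists_forall_mem_Ioo [DenselyOrdered β] (hs : Measurable s)
    (ht : Measurable t) (hst : ∀ᵐ p ∂μ, s p < t p) (n : ℕ) :
    (n + 1 : ℕ) * ∫⁻ p, μ {q | s p ∈ Ioo (s q) (t q)} ^ n ∂μ ≤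
      Measure.pi (fun _ : Fin (n + 1) => μ) {x | ∃ c, ∀ k, c ∈ Ioo (s (x k)) (t (x k))} := by
  have hR : MeasurableSet {z : α × α | s z.1 ∈ Ioo (s z.2) (t z.2)} :=
    (measurableSet_lt (hs.comp measurable_snd) (hs.comp measurable_fst)).inter
      (measurableSet_lt (hs.comp measurable_fst) (ht.comp measurable_snd))
  rw [← sum_pi_setOf_forall_succAbove μ (R := fun p q => s p ∈ Ioo (s q) (t q)) hR,
    ← tsum_fintype (L := .unconditional _), ← measure_iUnion _ fun j =>
      measurableSet_setOf_forall_succAbove (R := fun p q => s p ∈ Ioo (s q) (t q)) hR j]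
  · refine measure_mono_ae ?_
    have hst' : ∀ᵐ x ∂Measure.pi fun _ : Fin (n + 1) => μ, ∀ k, s (x k) < t (x k) :=
      ae_all_iff.2 fun k => (Measure.quasiMeasurePreserving_eval (fun _ => μ) k).ae hst
    filter_upwards [hst'] with x hx hxj
    obtain ⟨j, hj⟩ := mem_iUnion.1 hxj
    refine exists_forall_mem_Ioo_of_forall_ne_mem_Ioo (hx j) fun k hk => ?_
    obtain ⟨i, rfl⟩ := Fin.exists_succAbove_eq hk
    exact hj i
  · refine fun i j hij => disjoint_left.2 fun x hi hj => ?_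
    obtain ⟨k, rfl⟩ := Fin.exists_succAbove_eq hij.symm
    obtain ⟨l, hl⟩ := Fin.exists_succAbove_eq hij
    have hji := (hj l).1
    rw [hl] at hji
    exact lt_asymm (hi k).1 hji

-- Almost surely exactly one index has the largest left endpoint, and the intervals meet precisely
-- when that endpoint lies in all the others.
theorem pi_setOf_exists_forall_mem_Ioo [DenselyOrdered β] (hs : Measurable s) (ht : Measurable t)
    (hst : ∀ᵐ p ∂μ, s p < t p) (hnull : ∀ c, μ (s ⁻¹' {c}) = 0) (n : ℕ) :
    Measure.pi (fun _ : Fin (n + 1) => μ) {x | ∃ c, ∀ k, c ∈ Ioo (s (x k)) (t (x k))} =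
      (n + 1 : ℕ) * ∫⁻ p, μ {q | s p ∈ Ioo (s q) (t q)} ^ n ∂μ := by
  refine le_antisymm ?_ (le_pi_setOf_exists_forall_mem_Ioo hs ht hst n)
  simpa only [measure_setOf_mem_Ico_eq_Ioo hnull] using
    pi_setOf_exists_forall_mem_Ioo_le (μ := μ) hs ht n

end RandomIntervals

section AbsConvexHull

lemma lintegral_measure_add_lintegral_measure_compl {α β : Type*} [MeasurableSpace α]
    [MeasurableSpace β] (μ : Measure α) (ν : Measure β) [SFinite μ] [SFinite ν] {S : Set (α × β)}
    (hS : MeasurableSet S) :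
    ∫⁻ x, ν {y | (x, y) ∈ S} ∂μ + ∫⁻ y, μ {x | (x, y) ∉ S} ∂ν = μ univ * ν univ := by
  rw [← Measure.prod_prod, univ_prod_univ, ← measure_add_measure_compl hS, Measure.prod_apply hS,
    Measure.prod_apply_symm hS.compl]
  rfl

lemma IsSymConvexBody.absConvex {K : Set E} (hK : IsSymConvexBody K) : AbsConvex ℝ K := by
  obtain ⟨-, hconv, -, hneg⟩ := hK
  refine ⟨(balanced_iff_neg_mem hconv).2 fun x hx => ?_, hconv⟩
  rwa [hneg, mem_neg, neg_neg]

variable {ι V : Type*} [AddCommGroup V] [Module ℝ V] [TopologicalSpace V] [IsTopologicalAddGroup V]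
  [ContinuousSMul ℝ V]

lemma isCompact_absConvexHull_range [Finite ι] (x : ι → V) :
    IsCompact (absConvexHull ℝ (range x)) := by
  rw [← convexHull_union_neg_eq_absConvexHull]
  exact ((finite_range x).union (finite_range x).neg).isCompact_convexHull ℝ

variable [LocallyConvexSpace ℝ V] [T2Space V]

section Finite

variable [Finite ι]

lemma notMem_absConvexHull_range_iff {x : ι → V} {y : V} :
    y ∉ absConvexHull ℝ (range x) ↔ ∃ f : V →L[ℝ] ℝ, ∀ k, |f (x k)| < f y := by
  constructor
  · intro hy
    obtain ⟨f, u, hlt, hu⟩ := geometric_hahn_banach_closed_point convex_absConvexHull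
      (isCompact_absConvexHull_range x).isClosed hy
    have hmem (k) : x k ∈ absConvexHull ℝ (range x) := subset_absConvexHull (mem_range_self k)
    refine ⟨f, fun k => abs_lt.2 ⟨?_, (hlt _ (hmem k)).trans hu⟩⟩
    simpa [neg_lt] using (hlt _ (balanced_absConvexHull.neg_mem_iff.2 (hmem k))).trans hu
  · rintro ⟨f, hf⟩ hy
    rw [← convexHull_union_neg_eq_absConvexHull] at hy
    refine lt_irrefl (f y) (convexHull_min (t := {p | f p < f y}) ?_
      (convex_halfSpace_lt f.toLinearMap.isLinear _) hy)
    rintro p (⟨k, rfl⟩ | ⟨k, hk⟩)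
    · exact (abs_lt.1 (hf k)).2
    · simpa [hk, neg_lt] using (abs_lt.1 (hf k)).1

lemma isClosed_setOf_mem_absConvexHull_range :
    IsClosed {z : (ι → V) × V | z.2 ∈ absConvexHull ℝ (range z.1)} := by
  have hcompl : {z : (ι → V) × V | z.2 ∈ absConvexHull ℝ (range z.1)}ᶜ =
      ⋃ f : V →L[ℝ] ℝ, ⋂ k, {z | |f (z.1 k)| < f z.2} := by
    ext z
    simpa using notMem_absConvexHull_range_iff (x := z.1) (y := z.2)
  rw [← isOpen_compl_iff, hcompl]
  exact isOpen_iUnion fun f => isOpen_iInter_of_finite fun k =>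
    isOpen_lt (by fun_prop) (by fun_prop)

variable [SecondCountableTopology V] [MeasurableSpace V] [BorelSpace V]

lemma measurable_measure_absConvexHull_range (μ : Measure V) [SFinite μ] :
    Measurable fun x : ι → V => μ (absConvexHull ℝ (range x)) :=
  measurable_measure_prodMk_left isClosed_setOf_mem_absConvexHull_range.measurableSet

end Finite

theorem lintegral_measure_absConvexHull_add_lintegral_pi_notMem [Fintype ι]
    [SecondCountableTopology V] [MeasurableSpace V] [BorelSpace V] (μ : Measure V) [SigmaFinite μ]
    {K : Set V} (hKm : MeasurableSet K) (hK : AbsConvex ℝ K) :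
    ∫⁻ x, μ (absConvexHull ℝ (range x)) ∂(Measure.pi fun _ : ι => μ.restrict K) +
      ∫⁻ y in K, Measure.pi (fun _ : ι => μ.restrict K) {x | y ∉ absConvexHull ℝ (range x)} ∂μ =
      μ K ^ (Fintype.card ι + 1) := by
  have htotal := lintegral_measure_add_lintegral_measure_compl
    (Measure.pi fun _ : ι => μ.restrict K) (μ.restrict K)
    (isClosed_setOf_mem_absConvexHull_range (ι := ι) (V := V)).measurableSet
  have hmem : ∀ᵐ x ∂Measure.pi fun _ : ι => μ.restrict K, ∀ k, x k ∈ K := ae_all_iff.2 fun k =>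
    (Measure.quasiMeasurePreserving_eval (fun _ => μ.restrict K) k).ae (ae_restrict_mem hKm)
  have hrestrict : ∀ᵐ x ∂Measure.pi fun _ : ι => μ.restrict K,
      μ.restrict K (absConvexHull ℝ (range x)) = μ (absConvexHull ℝ (range x)) := by
    filter_upwards [hmem] with x hx
    exact Measure.restrict_eq_self μ (absConvexHull_min (range_subset_iff.2 hx) hK)
  rw [Measure.pi_univ, Finset.prod_const, Measure.restrict_apply_univ, ← pow_succ] at htotal
  rw [← lintegral_congr_ae hrestrict]
  exact htotal

end AbsConvexHull

section Halfspace

variable {V : Type*} [NormedAddCommGroup V] [NormedSpace ℝ V] [FiniteDimensional ℝ V]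
  [MeasurableSpace V] [BorelSpace V] (μ : Measure V) [μ.IsAddHaarMeasure] {f : V →ₗ[ℝ] ℝ}

lemma ae_linearMap_apply_ne (hf : f ≠ 0) (d : ℝ) : ∀ᵐ p ∂μ, f p ≠ d := by
  have : ProperSpace V := .of_locallyCompactSpace ℝ
  exact (ae_comp_linearMap_mem_iff f μ volume (LinearMap.surjective hf)
    (measurableSet_singleton d).compl).2 (Measure.ae_ne volume d)

lemma setLIntegral_eq_two_mul_setLIntegral_inter_pos (hf : f ≠ 0) {K : Set V} (hKneg : -K = K)
    {F : V → ℝ≥0∞} (hF : ∀ p, F (-p) = F p) :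
    ∫⁻ p in K, F p ∂μ = 2 * ∫⁻ p in K ∩ {p | 0 < f p}, F p ∂μ := by
  have hpos : MeasurableSet {p | 0 < f p} :=
    measurableSet_lt measurable_const f.continuous_of_finiteDimensional.measurable
  have hdiff : (K \ {p | 0 < f p} : Set V) =ᵐ[μ] Neg.neg ⁻¹' (K ∩ {p | 0 < f p}) := by
    rw [preimage_inter, neg_preimage, hKneg]
    filter_upwards [ae_linearMap_apply_ne μ hf 0] with p hp
    refine propext (and_congr_right fun _ => ?_)
    change ¬ 0 < f p ↔ 0 < f (-p)
    rw [map_neg, neg_pos, not_lt, hp.le_iff_lt]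
  rw [← lintegral_inter_add_sdiff F K hpos, two_mul, setLIntegral_congr hdiff]
  congr 1
  simpa only [hF] using (Measure.measurePreserving_neg μ).setLIntegral_comp_preimage_emb
    (MeasurableEquiv.neg V).measurableEmbedding F (K ∩ {p | 0 < f p})

end Halfspace

section Plane

/-- The Euclidean plane. -/
abbrev Plane : Type := EuclideanSpace ℝ (Fin 2)

lemma plane_ext {p q : Plane} (h₀ : p 0 = q 0) (h₁ : p 1 = q 1) : p = q := by
  ext i
  fin_cases i
  exacts [h₀, h₁]

/-- The standard area form on the plane: the signed area of the parallelogram spanned by `p`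
and `q`, as a bilinear map. -/
def wedge : Plane →ₗ[ℝ] Plane →ₗ[ℝ] ℝ :=
  LinearMap.mk₂ ℝ (fun p q => p 0 * q 1 - p 1 * q 0)
    (fun _ _ _ => by simp only [PiLp.add_apply]; ring)
    (fun _ _ _ => by simp only [PiLp.smul_apply, smul_eq_mul]; ring)
    (fun _ _ _ => by simp only [PiLp.add_apply]; ring)
    (fun _ _ _ => by simp only [PiLp.smul_apply, smul_eq_mul]; ring)

lemma wedge_apply (p q : Plane) : wedge p q = p 0 * q 1 - p 1 * q 0 := rfl

lemma wedge_self (p : Plane) : wedge p p = 0 := by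
  rw [wedge_apply]
  ring

lemma wedge_swap (p q : Plane) : wedge p q = -wedge q p := by
  simp only [wedge_apply]
  ring

@[fun_prop]
lemma continuous_wedge {X : Type*} [TopologicalSpace X] {p q : X → Plane} (hp : Continuous p)
    (hq : Continuous q) : Continuous fun x => wedge (p x) (q x) := by
  simp only [wedge_apply]
  fun_prop

lemma exists_wedge_eq_one {y : Plane} (hy : y ≠ 0) : ∃ w, wedge y w = 1 := by
  refine LinearMap.surjective (fun hzero => hy (plane_ext ?_ ?_)) 1
  · simpa [wedge_apply] using DFunLike.congr_fun hzero !₂[0, 1]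
  · simpa [wedge_apply] using DFunLike.congr_fun hzero !₂[1, 0]

/-- The slab bounded by the line through `y` and `p` and its mirror image in the origin. -/
def slab (y p : Plane) : Set Plane := {q | |wedge q (p - y)| ≤ |wedge y p|}

/-- The left endpoint of the interval of slopes `c` for which the functional
`q ↦ wedge q (w + c • y)` has absolute value less than `1` at `p`, assuming `wedge y p ≠ 0`. -/
def slopeInf (y w p : Plane) : ℝ := wedge p w / wedge y p - 1 / |wedge y p|

/-- The right endpoint of the interval of slopes `c` for which the functional
`q ↦ wedge q (w + c • y)` has absolute value less than `1` at `p`, assuming `wedge y p ≠ 0`. -/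
def slopeSup (y w p : Plane) : ℝ := wedge p w / wedge y p + 1 / |wedge y p|

lemma measurable_slopeInf (y w : Plane) : Measurable (slopeInf y w) := by
  unfold slopeInf
  simp only [wedge_apply, ← Real.norm_eq_abs]
  fun_prop

lemma measurable_slopeSup (y w : Plane) : Measurable (slopeSup y w) := by
  unfold slopeSup
  simp only [wedge_apply, ← Real.norm_eq_abs]
  fun_prop

lemma slopeInf_neg (y w p : Plane) : slopeInf y w (-p) = slopeInf y w p := by
  simp only [slopeInf, map_neg, LinearMap.neg_apply, neg_div_neg_eq, abs_neg]

lemma slopeInf_lt_slopeSup {y w p : Plane} (hp : wedge y p ≠ 0) :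
    slopeInf y w p < slopeSup y w p := by
  have : 0 < 1 / |wedge y p| := by positivity
  unfold slopeInf slopeSup
  linarith

lemma wedge_add_smul (y w p : Plane) (c : ℝ) :
    wedge p (w + c • y) = wedge p w - c * wedge y p := by
  rw [map_add, map_smul, wedge_swap p y, smul_eq_mul, mul_neg, sub_eq_add_neg]

lemma mem_Ioo_slopeInf_slopeSup_iff {y w p : Plane} {c : ℝ} (hp : wedge y p ≠ 0) :
    c ∈ Ioo (slopeInf y w p) (slopeSup y w p) ↔ |wedge p (w + c • y)| < 1 := by
  have hfactor : wedge p (w + c • y) = (wedge p w / wedge y p - c) * wedge y p := by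
    rw [wedge_add_smul]
    field_simp
  rw [hfactor, abs_mul, ← lt_div_iff₀ (abs_pos.2 hp), abs_lt]
  unfold slopeInf slopeSup
  constructor <;> rintro ⟨_, _⟩ <;> constructor <;> linarith

lemma abs_wedge_add_slopeInf_smul {y w p : Plane} (hp : wedge y p ≠ 0) :
    |wedge p (w + slopeInf y w p • y)| = 1 := by
  have hunit : wedge p (w + slopeInf y w p • y) = wedge y p / |wedge y p| := by
    rw [wedge_add_smul, slopeInf]
    field_simp
    ring
  rw [hunit, abs_div, abs_abs, div_self (abs_ne_zero.2 hp)]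

lemma ae_wedge_left_ne {y : Plane} (hy : y ≠ 0) (d : ℝ) : ∀ᵐ q : Plane, wedge y q ≠ d := by
  obtain ⟨w, hw⟩ := exists_wedge_eq_one hy
  refine ae_linearMap_apply_ne volume (fun hzero => ?_) d
  simp [hzero] at hw

lemma ae_abs_wedge_right_ne {v : Plane} (hv : v ≠ 0) (d : ℝ) :
    ∀ᵐ q : Plane, |wedge q v| ≠ d := by
  filter_upwards [ae_wedge_left_ne hv d, ae_wedge_left_ne hv (-d)] with q hpos hneg habs
  rw [wedge_swap, abs_neg] at habs
  rcases eq_or_eq_neg_of_abs_eq habs with h | h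
  exacts [hpos h, hneg h]

lemma eq_wedge_smul_add_wedge_smul {y w : Plane} (hw : wedge y w = 1) (p : Plane) :
    p = wedge p w • y + wedge y p • w := by
  simp only [wedge_apply] at hw ⊢
  apply plane_ext <;> simp only [PiLp.add_apply, PiLp.smul_apply, smul_eq_mul]
  · linear_combination -p 0 * hw
  · linear_combination -p 1 * hw

lemma wedge_add_smul_self {y w : Plane} (hw : wedge y w = 1) (c : ℝ) :
    wedge y (w + c • y) = 1 := by
  rw [wedge_add_smul, wedge_self, hw, mul_zero, sub_zero]

lemma ne_zero_of_wedge_eq_one {y w : Plane} (hw : wedge y w = 1) : y ≠ 0 := by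
  rintro rfl
  simp at hw

lemma add_smul_ne_zero_of_wedge_eq_one {y w : Plane} (hw : wedge y w = 1) (c : ℝ) :
    w + c • y ≠ 0 := by
  intro hzero
  simpa [hzero] using wedge_add_smul_self hw c

lemma notMem_absConvexHull_range_iff_exists_slope {ι : Type*} [Finite ι] [Nonempty ι]
    {y w : Plane} (hw : wedge y w = 1) (x : ι → Plane) :
    y ∉ absConvexHull ℝ (range x) ↔ ∃ c : ℝ, ∀ k, |wedge (x k) (w + c • y)| < 1 := by
  rw [notMem_absConvexHull_range_iff]
  constructor
  · rintro ⟨f, hf⟩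
    have hfy : 0 < f y := (abs_nonneg _).trans_lt (hf (Classical.arbitrary ι))
    refine ⟨-f w / f y, fun k => ?_⟩
    have hfk : f (x k) = wedge (x k) (w + (-f w / f y) • y) * f y := by
      conv_lhs => rw [eq_wedge_smul_add_wedge_smul hw (x k)]
      rw [wedge_add_smul, map_add, map_smul, map_smul, smul_eq_mul, smul_eq_mul]
      field_simp
      ring
    have hk := hf k
    rwa [hfk, abs_mul, abs_of_pos hfy, mul_lt_iff_lt_one_left hfy] at hk
  · rintro ⟨c, hc⟩
    refine ⟨(wedge.flip (w + c • y)).toContinuousLinearMap, fun k => ?_⟩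
    simpa only [LinearMap.coe_toContinuousLinearMap', LinearMap.flip_apply,
      wedge_add_smul_self hw] using hc k

lemma add_slopeInf_smul {y w p : Plane} (hw : wedge y w = 1) (hp : 0 < wedge y p) :
    w + slopeInf y w p • y = (wedge y p)⁻¹ • (p - y) := by
  conv_rhs => rw [eq_wedge_smul_add_wedge_smul hw p]
  have hexpand : wedge y (wedge p w • y + wedge y p • w) = wedge y p := by
    rw [← eq_wedge_smul_add_wedge_smul hw p]
  rw [hexpand, slopeInf, abs_of_pos hp]
  match_scalars <;> field_simp

lemma abs_wedge_add_slopeInf_smul_le_one_iff {y w p q : Plane} (hw : wedge y w = 1)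
    (hp : 0 < wedge y p) : |wedge q (w + slopeInf y w p • y)| ≤ 1 ↔ q ∈ slab y p := by
  rw [add_slopeInf_smul hw hp, map_smul, smul_eq_mul, abs_mul, abs_inv,
    inv_mul_le_one₀ (by positivity)]
  rfl

lemma ae_slopeInf_ne {y w : Plane} (hw : wedge y w = 1) (c : ℝ) :
    ∀ᵐ q : Plane, slopeInf y w q ≠ c := by
  filter_upwards [ae_wedge_left_ne (ne_zero_of_wedge_eq_one hw) 0,
    ae_abs_wedge_right_ne (add_smul_ne_zero_of_wedge_eq_one hw c) 1] with q hq hne hc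
  exact hne (hc ▸ abs_wedge_add_slopeInf_smul hq)

lemma volume_restrict_setOf_slopeInf_mem_Ioo {y w p : Plane} (hw : wedge y w = 1)
    (hp : 0 < wedge y p) (K : Set Plane) :
    volume.restrict K {q | slopeInf y w p ∈ Ioo (slopeInf y w q) (slopeSup y w q)} =
      volume.restrict K (slab y p) := by
  refine measure_congr (ae_restrict_of_ae ?_)
  filter_upwards [ae_wedge_left_ne (ne_zero_of_wedge_eq_one hw) 0,
    ae_abs_wedge_right_ne (add_smul_ne_zero_of_wedge_eq_one hw (slopeInf y w p)) 1] with q hq hne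
  refine propext ?_
  change slopeInf y w p ∈ Ioo (slopeInf y w q) (slopeSup y w q) ↔ q ∈ slab y p
  rw [mem_Ioo_slopeInf_slopeSup_iff hq, ← abs_wedge_add_slopeInf_smul_le_one_iff hw hp,
    hne.le_iff_lt]

lemma pi_setOf_notMem_absConvexHull_range_eq_slope {ι : Type*} [Fintype ι] [Nonempty ι]
    {y w : Plane} (hw : wedge y w = 1) (K : Set Plane) :
    Measure.pi (fun _ : ι => volume.restrict K) {x | y ∉ absConvexHull ℝ (range x)} =
      Measure.pi (fun _ : ι => volume.restrict K)
        {x | ∃ c, ∀ k, c ∈ Ioo (slopeInf y w (x k)) (slopeSup y w (x k))} := by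
  have hne : ∀ᵐ p ∂volume.restrict K, wedge y p ≠ 0 :=
    ae_restrict_of_ae (ae_wedge_left_ne (ne_zero_of_wedge_eq_one hw) 0)
  refine measure_congr ?_
  filter_upwards [ae_all_iff.2 fun k =>
    (Measure.quasiMeasurePreserving_eval (fun _ => volume.restrict K) k).ae hne] with x hx
  refine propext ((notMem_absConvexHull_range_iff_exists_slope hw x).trans ?_)
  exact exists_congr fun c => forall_congr' fun k => (mem_Ioo_slopeInf_slopeSup_iff (hx k)).symm

lemma setLIntegral_volume_slopeInf_mem_Ioo_pow {y w : Plane} (hw : wedge y w = 1) {K : Set Plane}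
    (hKneg : -K = K) (n : ℕ) :
    ∫⁻ p in K, volume.restrict K
        {q | slopeInf y w p ∈ Ioo (slopeInf y w q) (slopeSup y w q)} ^ n =
      2 * ∫⁻ p in K ∩ {p | 0 < wedge y p}, volume.restrict K (slab y p) ^ n := by
  have hne : wedge y ≠ 0 := fun hzero => by simp [hzero] at hw
  have hpos : MeasurableSet {p | 0 < wedge y p} :=
    measurableSet_lt measurable_const (wedge y).continuous_of_finiteDimensional.measurable
  rw [setLIntegral_eq_two_mul_setLIntegral_inter_pos volume hne hKneg
    fun p => by simp only [slopeInf_neg]]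
  congr 1
  refine lintegral_congr_ae ?_
  filter_upwards [ae_mono (Measure.restrict_mono inter_subset_right le_rfl)
    (ae_restrict_mem hpos)] with p hp
  rw [volume_restrict_setOf_slopeInf_mem_Ioo hw hp]

theorem pi_setOf_notMem_absConvexHull_range {K : Set Plane} (hKneg : -K = K) {y : Plane}
    (hy : y ≠ 0) (n : ℕ) :
    Measure.pi (fun _ : Fin (n + 1) => volume.restrict K) {x | y ∉ absConvexHull ℝ (range x)} =
      (n + 1 : ℕ) *
        (2 * ∫⁻ p in K ∩ {p | 0 < wedge y p}, volume.restrict K (slab y p) ^ n) := by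
  obtain ⟨w, hw⟩ := exists_wedge_eq_one hy
  have hst : ∀ᵐ p ∂volume.restrict K, slopeInf y w p < slopeSup y w p :=
    ae_restrict_of_ae ((ae_wedge_left_ne hy 0).mono fun _ => slopeInf_lt_slopeSup)
  have hnull (c : ℝ) : volume.restrict K (slopeInf y w ⁻¹' {c}) = 0 :=
    measure_eq_zero_iff_ae_notMem.2 (ae_restrict_of_ae (ae_slopeInf_ne hw c))
  rw [pi_setOf_notMem_absConvexHull_range_eq_slope hw,
    pi_setOf_exists_forall_mem_Ioo (measurable_slopeInf y w) (measurable_slopeSup y w) hst hnull,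
    setLIntegral_volume_slopeInf_mem_Ioo_pow hw hKneg]

end Plane

section LineParam

lemma measurePreserving_vecTwo :
    MeasurePreserving (fun z : ℝ × ℝ => (!₂[z.1, z.2] : Plane)) volume volume := by
  have hvec : (fun z : ℝ × ℝ => (!₂[z.1, z.2] : Plane)) =
      WithLp.toLp 2 ∘ MeasurableEquiv.finTwoArrow.symm :=
    funext fun z => plane_ext rfl rfl
  rw [hvec]
  exact (PiLp.volume_preserving_toLp (Fin 2)).comp (volume_preserving_finTwoArrow ℝ).symm

/-- Unit speed parametrization, by `t`, of the line with unit normal `(cos θ, sin θ)` at signed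
distance `r` from the origin. -/
def lineParam (θ r t : ℝ) : Plane := !₂[r * cos θ - t * sin θ, r * sin θ + t * cos θ]

@[fun_prop]
lemma continuous_lineParam {X : Type*} [TopologicalSpace X] {θ r t : X → ℝ} (hθ : Continuous θ)
    (hr : Continuous r) (ht : Continuous t) :
    Continuous fun x => lineParam (θ x) (r x) (t x) := by
  unfold lineParam
  fun_prop

lemma lineParam_add_lineParam (θ r₁ t₁ r₂ t₂ : ℝ) :
    lineParam θ r₁ t₁ + lineParam θ r₂ t₂ = lineParam θ (r₁ + r₂) (t₁ + t₂) := by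
  apply plane_ext <;> simp [lineParam] <;> ring

lemma smul_lineParam (c θ r t : ℝ) : c • lineParam θ r t = lineParam θ (c * r) (c * t) := by
  apply plane_ext <;> simp [lineParam] <;> ring

lemma norm_lineParam (θ r t : ℝ) : ‖lineParam θ r t‖ = √(r ^ 2 + t ^ 2) := by
  rw [EuclideanSpace.norm_eq, Fin.sum_univ_two]
  congr 1
  simp only [lineParam, norm_eq_abs, sq_abs, PiLp.toLp_apply, Matrix.cons_val_zero,
    Matrix.cons_val_one]
  linear_combination (r ^ 2 + t ^ 2) * sin_sq_add_cos_sq θ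

lemma isometry_lineParam (θ r : ℝ) : Isometry (lineParam θ r) := by
  refine Isometry.of_dist_eq fun s t => ?_
  have hadd : lineParam θ r s = lineParam θ 0 (s - t) + lineParam θ r t := by
    rw [lineParam_add_lineParam, zero_add, sub_add_cancel]
  rw [dist_eq_norm, hadd, add_sub_cancel_right, norm_lineParam, zero_pow two_ne_zero, zero_add,
    sqrt_sq_eq_abs, Real.dist_eq]

lemma lineParam_zero_eq_polar (θ ρ : ℝ) :
    lineParam θ 0 ρ = lineParam (π / 2) (ρ * cos θ) (ρ * sin θ) := by
  apply plane_ext <;> simp [lineParam]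

/-- The rotation by the angle `θ`, in which `lineParam θ r t` is the image of `(r, t)`. -/
def planeRotation (θ : ℝ) : Plane →ₗᵢ[ℝ] Plane where
  toFun p := lineParam θ (p 0) (p 1)
  map_add' p q := (lineParam_add_lineParam θ (p 0) (p 1) (q 0) (q 1)).symm
  map_smul' c p := (smul_lineParam c θ (p 0) (p 1)).symm
  norm_map' p := by
    change ‖lineParam θ (p 0) (p 1)‖ = ‖p‖
    rw [norm_lineParam, EuclideanSpace.norm_eq, Fin.sum_univ_two]
    simp only [norm_eq_abs, sq_abs]

lemma measurePreserving_lineParam (θ : ℝ) :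
    MeasurePreserving (fun z : ℝ × ℝ => lineParam θ z.1 z.2) volume volume :=
  ((planeRotation θ).toLinearIsometryEquiv rfl).measurePreserving.comp measurePreserving_vecTwo

lemma lintegral_lineParam (θ : ℝ) {f : Plane → ℝ≥0∞} (hf : Measurable f) :
    ∫⁻ p, f p = ∫⁻ r, ∫⁻ t, f (lineParam θ r t) := by
  have hrot := measurePreserving_lineParam θ
  rw [← hrot.lintegral_comp hf, Measure.volume_eq_prod]
  exact lintegral_prod _ (hf.comp hrot.measurable).aemeasurable

lemma lintegral_polar_lineParam {f : Plane → ℝ≥0∞} (hf : Measurable f) :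
    ∫⁻ p, f p =
      ∫⁻ θ in Ioo (-π) π, ∫⁻ ρ in Ioi (0 : ℝ), ENNReal.ofReal ρ * f (lineParam θ 0 ρ) := by
  have hrot := measurePreserving_lineParam (π / 2)
  simp only [lineParam_zero_eq_polar]
  rw [← hrot.lintegral_comp hf, ← lintegral_comp_polarCoord_symm, polarCoord_target,
    Measure.volume_eq_prod, ← Measure.prod_restrict, lintegral_prod_symm]
  · rfl
  · simp only [polarCoord_symm_apply, smul_eq_mul]
    have hpolar : Measurable fun z : ℝ × ℝ => lineParam (π / 2) (z.1 * cos z.2) (z.1 * sin z.2) :=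
      Continuous.measurable (by fun_prop)
    exact (measurable_fst.ennreal_ofReal.mul (hf.comp hpolar)).aemeasurable

-- In polar coordinates centred at `y` the point `p` is `y + lineParam θ 0 ρ`, and then `y` is
-- integrated along the lines with normal direction `θ`.
theorem lintegral_lintegral_blaschkePetkantschin {g : Plane × Plane → ℝ≥0∞} (hg : Measurable g) :
    ∫⁻ y, ∫⁻ p, g (y, p) = ∫⁻ θ in Ioo (-π) π, ∫⁻ r, ∫⁻ t, ∫⁻ ρ in Ioi (0 : ℝ),
      ENNReal.ofReal ρ * g (lineParam θ r t, lineParam θ r (t + ρ)) := by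
  have hpolar (y : Plane) : ∫⁻ p, g (y, p) = ∫⁻ θ in Ioo (-π) π, ∫⁻ ρ in Ioi (0 : ℝ),
      ENNReal.ofReal ρ * g (y, y + lineParam θ 0 ρ) := by
    rw [← lintegral_add_left_eq_self _ y, lintegral_polar_lineParam]
    exact (hg.comp measurable_prodMk_left).comp (measurable_const_add y)
  have hmeas : Measurable fun z : Plane × ℝ => ∫⁻ ρ in Ioi (0 : ℝ),
      ENNReal.ofReal ρ * g (z.1, z.1 + lineParam z.2 0 ρ) := by
    have hline : Measurable fun z : (Plane × ℝ) × ℝ => (z.1.1, z.1.1 + lineParam z.1.2 0 z.2) :=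
      Continuous.measurable (by fun_prop)
    exact (measurable_snd.ennreal_ofReal.mul (hg.comp hline)).lintegral_prod_right'
  simp only [hpolar]
  rw [lintegral_lintegral_swap hmeas.aemeasurable]
  refine lintegral_congr fun θ => ?_
  refine (lintegral_lineParam θ (hmeas.comp measurable_prodMk_right)).trans ?_
  simp only [Function.comp_apply, lineParam_add_lineParam, add_zero]

end LineParam

section Chord

/-- The part of the line with unit normal `(cos θ, sin θ)` at signed distance `r` from the origin
that lies in `K`, as a set of values of the arclength parameter of `lineParam θ r`. -/
def chord (K : Set Plane) (θ r : ℝ) : Set ℝ := lineParam θ r ⁻¹' K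

/-- The points at distance at most `r` from the line through the origin with unit normal
`(cos θ, sin θ)`. -/
def strip (θ r : ℝ) : Set Plane := {p | |p 0 * cos θ + p 1 * sin θ| ≤ r}

lemma normal_lineParam (θ r t : ℝ) :
    lineParam θ r t 0 * cos θ + lineParam θ r t 1 * sin θ = r := by
  simp only [lineParam, PiLp.toLp_apply, Matrix.cons_val_zero, Matrix.cons_val_one]
  linear_combination r * sin_sq_add_cos_sq θ

lemma lineParam_normal_tangent (θ : ℝ) (p : Plane) :
    lineParam θ (p 0 * cos θ + p 1 * sin θ) (p 1 * cos θ - p 0 * sin θ) = p := by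
  apply plane_ext <;>
    simp only [lineParam, PiLp.toLp_apply, Matrix.cons_val_zero, Matrix.cons_val_one]
  · linear_combination p 0 * sin_sq_add_cos_sq θ
  · linear_combination p 1 * sin_sq_add_cos_sq θ

lemma wedge_lineParam (θ r₁ t₁ r₂ t₂ : ℝ) :
    wedge (lineParam θ r₁ t₁) (lineParam θ r₂ t₂) = r₁ * t₂ - t₁ * r₂ := by
  simp only [wedge_apply, lineParam, Matrix.cons_val_zero, Matrix.cons_val_one]
  linear_combination (r₁ * t₂ - t₁ * r₂) * sin_sq_add_cos_sq θ

lemma slab_lineParam {θ r t ρ : ℝ} (hr : 0 ≤ r) (hρ : 0 < ρ) :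
    slab (lineParam θ r t) (lineParam θ r (t + ρ)) = strip θ r := by
  ext q
  have hdiff : lineParam θ r (t + ρ) - lineParam θ r t = lineParam θ 0 ρ := by
    rw [sub_eq_iff_eq_add', lineParam_add_lineParam, add_zero]
  have hq := lineParam_normal_tangent θ q
  change |wedge q (_ - _)| ≤ |wedge _ _| ↔ |_| ≤ r
  nth_rw 1 [← hq]
  rw [hdiff, wedge_lineParam, wedge_lineParam, mul_zero, sub_zero, abs_mul, abs_of_pos hρ]
  rw [show r * (t + ρ) - t * r = r * ρ by ring, abs_mul, abs_of_pos hρ, abs_of_nonneg hr,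
    mul_le_mul_iff_left₀ hρ]

lemma measurable_volume_restrict_slab (K : Set Plane) :
    Measurable fun z : Plane × Plane => volume.restrict K (slab z.1 z.2) := by
  have hslab : IsClosed {z : (Plane × Plane) × Plane | z.2 ∈ slab z.1.1 z.1.2} := by
    have hleft : Continuous fun z : (Plane × Plane) × Plane => |wedge z.2 (z.1.2 - z.1.1)| := by
      fun_prop
    have hright : Continuous fun z : (Plane × Plane) × Plane => |wedge z.1.1 z.1.2| := by
      fun_prop
    exact isClosed_le hleft hright
  exact measurable_measure_prodMk_left hslab.measurableSet

lemma measurable_volume_restrict_strip (K : Set Plane) :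
    Measurable fun z : ℝ × ℝ => volume.restrict K (strip z.1 z.2) := by
  have hstrip : IsClosed {z : (ℝ × ℝ) × Plane | z.2 ∈ strip z.1.1 z.1.2} := by
    have hleft : Continuous fun z : (ℝ × ℝ) × Plane => |z.2 0 * cos z.1.1 + z.2 1 * sin z.1.1| := by
      fun_prop
    exact isClosed_le hleft continuous_fst.snd
  exact measurable_measure_prodMk_left hstrip.measurableSet

variable {K : Set Plane}

lemma measurable_volume_chord (hK : MeasurableSet K) :
    Measurable fun z : ℝ × ℝ => volume (chord K z.1 z.2) := by
  have hline : Measurable fun z : (ℝ × ℝ) × ℝ => lineParam z.1.1 z.1.2 z.2 :=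
    Continuous.measurable (by fun_prop)
  exact measurable_measure_prodMk_left (hline hK)

lemma isCompact_chord (hK : IsCompact K) (θ r : ℝ) : IsCompact (chord K θ r) :=
  (isometry_lineParam θ r).isClosedEmbedding.isCompact_preimage hK

lemma convex_chord (hK : Convex ℝ K) (θ r : ℝ) : Convex ℝ (chord K θ r) := by
  intro s hs t ht a b ha hb hab
  have hline : lineParam θ r (a • s + b • t) = a • lineParam θ r s + b • lineParam θ r t := by
    rw [smul_lineParam, smul_lineParam, lineParam_add_lineParam, ← add_mul, hab, one_mul]
    rfl
  change lineParam θ r (a • s + b • t) ∈ K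
  rw [hline]
  exact hK hs ht ha hb hab

lemma hausdorffMeasure_line_inter (K : Set Plane) (θ r : ℝ) :
    μH[1] ({p : Plane | p 0 * cos θ + p 1 * sin θ = r} ∩ K) = volume (chord K θ r) := by
  rw [← hausdorffMeasure_real,
    ← (isometry_lineParam θ r).hausdorffMeasure_image (Or.inl zero_le_one)]
  congr 1
  rw [chord, image_preimage_eq_range_inter]
  congr 1
  ext p
  constructor
  · rintro rfl
    exact ⟨_, lineParam_normal_tangent θ p⟩
  · rintro ⟨t, rfl⟩
    exact normal_lineParam θ r t

end Chord

section ChordPower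

lemma setLIntegral_Ioc_ofReal {c : ℝ} (hc : 0 ≤ c) :
    ∫⁻ ρ in Ioc 0 c, ENNReal.ofReal ρ = ENNReal.ofReal (c ^ 2 / 2) := by
  rw [← ofReal_integral_eq_lintegral_ofReal, ← intervalIntegral.integral_of_le hc, integral_id,
    zero_pow two_ne_zero, sub_zero]
  · exact continuous_id.integrableOn_Ioc
  · filter_upwards [ae_restrict_mem measurableSet_Ioc] with ρ hρ using hρ.1.le

lemma setLIntegral_Icc_ofReal_sub_sq {a b : ℝ} (hab : a ≤ b) :
    ∫⁻ t in Icc a b, ENNReal.ofReal ((b - t) ^ 2 / 2) = ENNReal.ofReal ((b - a) ^ 3 / 6) := by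
  rw [← ofReal_integral_eq_lintegral_ofReal, integral_Icc_eq_integral_Ioc,
    ← intervalIntegral.integral_of_le hab, intervalIntegral.integral_div,
    intervalIntegral.integral_comp_sub_left (fun x => x ^ 2), integral_pow]
  · congr 1
    norm_num
    ring
  · exact Continuous.integrableOn_Icc (by fun_prop)
  · exact Filter.Eventually.of_forall fun t => by positivity

lemma lintegral_lintegral_ofReal_eq_volume_pow_three {I : Set ℝ} (hI : IsCompact I)
    (hconv : Convex ℝ I) :
    ∫⁻ t in I, ∫⁻ ρ in Ioi 0 ∩ (t + ·) ⁻¹' I, ENNReal.ofReal ρ = volume I ^ 3 / 6 := by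
  rcases I.eq_empty_or_nonempty with rfl | hne
  · simp
  obtain ⟨a, b, hab, rfl⟩ : ∃ a b, a ≤ b ∧ I = Icc a b :=
    ⟨sInf I, sSup I, csInf_le_csSup hne hI.bddBelow hI.bddAbove,
      eq_Icc_of_connected_compact ⟨hne, hconv.isPreconnected⟩ hI⟩
  have hinner (t : ℝ) (ht : t ∈ Icc a b) : ∫⁻ ρ in Ioi 0 ∩ (t + ·) ⁻¹' Icc a b, ENNReal.ofReal ρ =
      ENNReal.ofReal ((b - t) ^ 2 / 2) := by
    have hset : Ioi 0 ∩ (t + ·) ⁻¹' Icc a b = Ioc 0 (b - t) := by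
      ext ρ
      simp only [mem_inter_iff, mem_Ioi, mem_preimage, mem_Icc, mem_Ioc]
      grind
    rw [hset, setLIntegral_Ioc_ofReal (sub_nonneg.2 ht.2)]
  rw [setLIntegral_congr_fun measurableSet_Icc hinner, setLIntegral_Icc_ofReal_sub_sq hab,
    volume_Icc, ENNReal.ofReal_div_of_pos (by norm_num), ENNReal.ofReal_pow (sub_nonneg.2 hab),
    ENNReal.ofReal_ofNat]

variable {K : Set Plane}

lemma setLIntegral_setLIntegral_blaschkePetkantschin (hK : MeasurableSet K)
    {g : Plane × Plane → ℝ≥0∞} (hg : Measurable g) :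
    ∫⁻ y in K, ∫⁻ p in K, g (y, p) = ∫⁻ θ in Ioo (-π) π, ∫⁻ r, ∫⁻ t in chord K θ r,
      ∫⁻ ρ in Ioi 0 ∩ (t + ·) ⁻¹' chord K θ r,
        ENNReal.ofReal ρ * g (lineParam θ r t, lineParam θ r (t + ρ)) := by
  have hchord (θ r : ℝ) : MeasurableSet (chord K θ r) :=
    (isometry_lineParam θ r).continuous.measurable hK
  have hprod (y p : Plane) : (K ×ˢ K).indicator g (y, p) =
      K.indicator (fun y => K.indicator (fun p => g (y, p)) p) y := by
    by_cases hy : y ∈ K <;> by_cases hp : p ∈ K <;> simp [hy, hp]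
  have hleft : ∫⁻ y in K, ∫⁻ p in K, g (y, p) = ∫⁻ y, ∫⁻ p, (K ×ˢ K).indicator g (y, p) := by
    simp only [← lintegral_indicator hK, hprod]
    refine lintegral_congr fun y => ?_
    by_cases hy : y ∈ K <;> simp [hy]
  rw [hleft, lintegral_lintegral_blaschkePetkantschin (hg.indicator (hK.prod hK))]
  refine lintegral_congr fun θ => lintegral_congr fun r => ?_
  rw [← lintegral_indicator (hchord θ r)]
  refine lintegral_congr fun t => ?_
  by_cases ht : t ∈ chord K θ r
  · rw [indicator_of_mem ht, inter_comm,
      ← setLIntegral_indicator (measurable_const_add t (hchord θ r))]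
    refine lintegral_congr fun ρ => ?_
    rw [hprod, indicator_of_mem (by exact ht)]
    by_cases hρ : lineParam θ r (t + ρ) ∈ K
    · have hρ' : ρ ∈ (t + ·) ⁻¹' chord K θ r := hρ
      rw [indicator_of_mem hρ, indicator_of_mem hρ']
    · have hρ' : ρ ∉ (t + ·) ⁻¹' chord K θ r := hρ
      rw [indicator_of_notMem hρ, indicator_of_notMem hρ', mul_zero]
  · have ht' : lineParam θ r t ∉ K := ht
    simp [ht, ht']

/-- The integral of `A(r, θ) ^ n * ℓ(r, θ) ^ 3` over all lines, where `A` is the area of `K`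
between the line and its mirror image in the origin and `ℓ` is the length of its chord. -/
def stripChordIntegral (n : ℕ) (K : Set Plane) : ℝ≥0∞ :=
  ∫⁻ θ in Ioo (-π) π, ∫⁻ r in Ioi (0 : ℝ),
    volume.restrict K (strip θ r) ^ n * volume (chord K θ r) ^ 3

lemma indicator_wedge_pos_slab_lineParam (K : Set Plane) (n : ℕ) {θ r t ρ : ℝ} (hρ : 0 < ρ) :
    {z : Plane × Plane | 0 < wedge z.1 z.2}.indicator
        (fun z => volume.restrict K (slab z.1 z.2) ^ n) (lineParam θ r t, lineParam θ r (t + ρ)) =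
      (Ioi 0).indicator (fun r => volume.restrict K (strip θ r) ^ n) r := by
  have hwedge : wedge (lineParam θ r t) (lineParam θ r (t + ρ)) = r * ρ := by
    rw [wedge_lineParam]
    ring
  by_cases hr : 0 < r
  · simp [hwedge, hr, hρ, slab_lineParam hr.le hρ]
  · simp [hwedge, hr, hρ]

lemma setLIntegral_chord_volume_slab_pow (hK : IsCompact K) (hconv : Convex ℝ K) (n : ℕ)
    (θ r : ℝ) :
    ∫⁻ t in chord K θ r, ∫⁻ ρ in Ioi 0 ∩ (t + ·) ⁻¹' chord K θ r, ENNReal.ofReal ρ *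
        {z : Plane × Plane | 0 < wedge z.1 z.2}.indicator
          (fun z => volume.restrict K (slab z.1 z.2) ^ n)
          (lineParam θ r t, lineParam θ r (t + ρ)) =
      (Ioi 0).indicator
        (fun r => volume.restrict K (strip θ r) ^ n * volume (chord K θ r) ^ 3 / 6) r := by
  have hchord := (isCompact_chord hK θ r).measurableSet
  have hfinite : (Ioi 0).indicator (fun r => volume.restrict K (strip θ r) ^ n) r ≠ ∞ := by
    have := isFiniteMeasure_restrict.2 (hK.measure_ne_top (μ := volume))
    by_cases hr : r ∈ Ioi 0 <;> simp [hr]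
  have hinner (t : ℝ) := setLIntegral_congr_fun (μ := volume)
    (measurableSet_Ioi.inter (measurable_const_add t hchord)) fun ρ hρ =>
      congrArg (ENNReal.ofReal ρ * ·)
        (indicator_wedge_pos_slab_lineParam K n (θ := θ) (r := r) (t := t) hρ.1)
  simp only [hinner, lintegral_mul_const' _ _ hfinite]
  rw [lintegral_lintegral_ofReal_eq_volume_pow_three (isCompact_chord hK θ r)
    (convex_chord hconv θ r)]
  by_cases hr : r ∈ Ioi 0
  · rw [indicator_of_mem hr, indicator_of_mem hr, mul_comm, mul_div_assoc]
  · simp only [indicator_of_notMem hr, mul_zero]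

theorem setLIntegral_volume_slab_pow_eq (hK : IsCompact K) (hconv : Convex ℝ K) (n : ℕ) :
    ∫⁻ y in K, ∫⁻ p in K ∩ {p | 0 < wedge y p}, volume.restrict K (slab y p) ^ n =
      stripChordIntegral n K / 6 := by
  have hpos : MeasurableSet {z : Plane × Plane | 0 < wedge z.1 z.2} :=
    measurableSet_lt measurable_const (Continuous.measurable (by fun_prop))
  have hind (y : Plane) : ∫⁻ p in K ∩ {p | 0 < wedge y p}, volume.restrict K (slab y p) ^ n =
      ∫⁻ p in K, {z : Plane × Plane | 0 < wedge z.1 z.2}.indicator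
        (fun z => volume.restrict K (slab z.1 z.2) ^ n) (y, p) := by
    rw [inter_comm]
    exact (setLIntegral_indicator (measurable_prodMk_left hpos) _).symm
  have hmeas := ((measurable_volume_restrict_slab K).pow_const n).indicator hpos
  simp only [hind]
  rw [setLIntegral_setLIntegral_blaschkePetkantschin hK.measurableSet hmeas]
  simp only [setLIntegral_chord_volume_slab_pow hK hconv, lintegral_indicator measurableSet_Ioi,
    stripChordIntegral, div_eq_mul_inv,
    lintegral_mul_const' (6⁻¹ : ℝ≥0∞) _ (ENNReal.inv_ne_top.2 (by norm_num))]

theorem lintegral_volume_absConvexHull_add_stripChordIntegral (hK : IsSymConvexBody K) (n : ℕ) :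
    ∫⁻ x, volume (absConvexHull ℝ (range x))
        ∂Measure.pi (fun _ : Fin (n + 1) => volume.restrict K) +
      (n + 1 : ℕ) / 3 * stripChordIntegral n K = volume K ^ (n + 2) := by
  obtain ⟨hcompact, hconv, -, hneg⟩ := id hK
  have hmiss : ∫⁻ y in K, Measure.pi (fun _ : Fin (n + 1) => volume.restrict K)
      {x | y ∉ absConvexHull ℝ (range x)} = (n + 1 : ℕ) * (2 * (stripChordIntegral n K / 6)) := by
    rw [← setLIntegral_volume_slab_pow_eq hcompact hconv,
      ← lintegral_const_mul' _ _ (ENNReal.ofNat_ne_top),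
      ← lintegral_const_mul' _ _ (ENNReal.natCast_ne_top _)]
    refine lintegral_congr_ae (ae_restrict_of_ae ?_)
    filter_upwards [Measure.ae_ne volume 0] with y hy
    exact pi_setOf_notMem_absConvexHull_range hneg.symm hy n
  have hthird : (2 / 6 : ℝ≥0∞) = 1 / 3 := by
    rw [ENNReal.div_eq_div_iff] <;> norm_num
  have hcoeff : (n + 1 : ℕ) * (2 * (stripChordIntegral n K / 6)) =
      (n + 1 : ℕ) / 3 * stripChordIntegral n K := by
    rw [← mul_div_assoc, ENNReal.mul_div_right_comm, hthird, one_div, div_eq_mul_inv, mul_assoc]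
  rw [← hcoeff, ← hmiss, lintegral_measure_absConvexHull_add_lintegral_pi_notMem volume
    hcompact.measurableSet hK.absConvex, Fintype.card_fin]

end ChordPower

section Expectation

variable {K : Set Plane}

lemma measurable_volume_strip_pow_mul_volume_chord_pow (hK : MeasurableSet K) (n : ℕ) :
    Measurable (Function.uncurry fun θ r =>
      volume.restrict K (strip θ r) ^ n * volume (chord K θ r) ^ 3) :=
  ((measurable_volume_restrict_strip K).pow_const n).mul ((measurable_volume_chord hK).pow_const 3)

lemma setIntegral_volume_strip_mul_volume_chord (hK : IsCompact K) (n : ℕ) (θ : ℝ) :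
    ∫ r in Ioi (0 : ℝ), (volume ({p : Plane | |p 0 * cos θ + p 1 * sin θ| ≤ r} ∩ K)).toReal ^ n *
        (μH[1] ({p : Plane | p 0 * cos θ + p 1 * sin θ = r} ∩ K)).toReal ^ 3 =
      (∫⁻ r in Ioi (0 : ℝ),
        volume.restrict K (strip θ r) ^ n * volume (chord K θ r) ^ 3).toReal := by
  have hmeas := (measurable_volume_strip_pow_mul_volume_chord_pow
    hK.measurableSet n).of_uncurry_left (x := θ)
  have := isFiniteMeasure_restrict.2 (hK.measure_ne_top (μ := volume))
  rw [← integral_toReal hmeas.aemeasurable]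
  · refine integral_congr_ae (Filter.Eventually.of_forall fun r => ?_)
    simp only [hausdorffMeasure_line_inter, ENNReal.toReal_mul,
      ENNReal.toReal_pow, Measure.restrict_apply' hK.measurableSet, strip]
  · refine Filter.Eventually.of_forall fun r => ENNReal.mul_lt_top ?_ ?_
    · exact ENNReal.pow_lt_top (measure_lt_top _ _)
    · exact ENNReal.pow_lt_top (isCompact_chord hK θ r).measure_lt_top

theorem integral_volume_strip_mul_volume_chord_eq_toReal (hK : IsCompact K) {n : ℕ}
    (hfinite : stripChordIntegral n K ≠ ∞) :
    ∫ θ in (0 : ℝ)..(2 * π), ∫ r in Ioi (0 : ℝ),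
        (volume ({p : Plane | |p 0 * cos θ + p 1 * sin θ| ≤ r} ∩ K)).toReal ^ n *
          (μH[1] ({p : Plane | p 0 * cos θ + p 1 * sin θ = r} ∩ K)).toReal ^ 3 =
      (stripChordIntegral n K).toReal := by
  set J : ℝ → ℝ≥0∞ := fun θ =>
    ∫⁻ r in Ioi (0 : ℝ), volume.restrict K (strip θ r) ^ n * volume (chord K θ r) ^ 3
  have hmeas : Measurable J :=
    (measurable_volume_strip_pow_mul_volume_chord_pow hK.measurableSet n).lintegral_prod_right
  have hperiodic : Function.Periodic (fun θ => (J θ).toReal) (2 * π) := fun θ => by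
    have hline : lineParam (θ + 2 * π) = lineParam θ := by
      funext r t
      simp only [lineParam, cos_add_two_pi, sin_add_two_pi]
    simp only [J, strip, chord, hline, cos_add_two_pi, sin_add_two_pi]
  have hshift := hperiodic.intervalIntegral_add_eq 0 (-π)
  rw [zero_add, show -π + 2 * π = π by ring] at hshift
  simp only [setIntegral_volume_strip_mul_volume_chord hK]
  rw [hshift, intervalIntegral.integral_of_le (by linarith [pi_pos]),
    integral_Ioc_eq_integral_Ioo]
  exact integral_toReal hmeas.aemeasurable (ae_lt_top hmeas hfinite)

lemma stripChordIntegral_ne_top (hK : IsSymConvexBody K) (n : ℕ) :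
    stripChordIntegral n K ≠ ∞ := by
  have hvol : volume K ^ (n + 2) ≠ ∞ := ENNReal.pow_ne_top hK.1.measure_ne_top
  rw [← lintegral_volume_absConvexHull_add_stripChordIntegral hK] at hvol
  refine fun htop => hvol ?_
  rw [htop, ENNReal.mul_top (ENNReal.div_ne_zero.2 ⟨by simp, ENNReal.ofNat_ne_top⟩), add_top]

lemma momentV_one_eq_toReal_lintegral {n : ℕ} (K : Set (EuclideanSpace ℝ (Fin n))) (N : ℕ) :
    momentV n N K 1 = (∫⁻ x, volume (absConvexHull ℝ (range x))
      ∂Measure.pi fun _ : Fin N => volume.restrict K).toReal / (volume K).toReal ^ (N + 1) := by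
  have hset : {x : Fin N → EuclideanSpace ℝ (Fin n) | ∀ i, x i ∈ K} = univ.pi fun _ => K := by
    ext x
    simp
  simp only [momentV, rpow_one, convexHull_union_neg_eq_absConvexHull, hset, volume_pi,
    Measure.restrict_pi_pi, integral_div]
  rw [integral_toReal (measurable_measure_absConvexHull_range volume).aemeasurable
    (Filter.Eventually.of_forall fun x => (isCompact_absConvexHull_range x).measure_lt_top),
    div_div, pow_succ']

theorem momentV_formula_dim_two_general (hK : IsSymConvexBody K) {N : ℕ} (hN : N ≠ 0) :
    momentV 2 N K 1 =
      1 - N / (3 * (volume K).toReal ^ (N + 1)) * ∫ θ in (0 : ℝ)..(2 * π), ∫ r in Ioi (0 : ℝ),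
        (volume ({p : Plane | |p 0 * cos θ + p 1 * sin θ| ≤ r} ∩ K)).toReal ^ (N - 1) *
          (μH[1] ({p : Plane | p 0 * cos θ + p 1 * sin θ = r} ∩ K)).toReal ^ 3 := by
  obtain ⟨n, rfl⟩ := Nat.exists_eq_succ_of_ne_zero hN
  have hvol : 0 < (volume K).toReal :=
    ENNReal.toReal_pos (Measure.measure_pos_of_nonempty_interior volume hK.2.2.1).ne'
      hK.1.measure_ne_top
  have hfinite : volume K ^ (n + 2) ≠ ∞ := ENNReal.pow_ne_top hK.1.measure_ne_top
  have hsum := lintegral_volume_absConvexHull_add_stripChordIntegral hK n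
  rw [← hsum, ENNReal.add_ne_top] at hfinite
  have hreal := congrArg ENNReal.toReal hsum
  rw [ENNReal.toReal_add hfinite.1 hfinite.2, ENNReal.toReal_mul, ENNReal.toReal_div,
    ENNReal.toReal_natCast, ENNReal.toReal_ofNat, ENNReal.toReal_pow] at hreal
  rw [Nat.succ_eq_add_one, momentV_one_eq_toReal_lintegral, Nat.add_sub_cancel,
    integral_volume_strip_mul_volume_chord_eq_toReal hK.1 (stripChordIntegral_ne_top hK n),
    eq_sub_of_add_eq hreal]
  field_simp

end Expectation

/-- Proposition `n = 2`: if `K ⊆ ℝ²` is a symmetric convex body of area 1 and `N ≥ 2`,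
then `𝔼 V_{K,N} = 1 − (N/3) ∫₀^{2π} ∫₀^∞ A(r,θ)^{N−1} ℓ(r,θ)³ dr dθ`, where
`ℓ(r,θ)` is the length of the chord `{(x,y) : (x,y)·(cos θ, sin θ) = r} ∩ K` and
`A(r,θ)` is the area of the strip `{(x,y) : |(x,y)·(cos θ, sin θ)| ≤ r} ∩ K`. -/
theorem momentV_formula_dim_two
    (K : Set (EuclideanSpace ℝ (Fin 2))) (hK : IsSymConvexBody K)
    (hvol : volume K = 1) (N : ℕ) (hN : 2 ≤ N) :
    momentV 2 N K 1 =
      1 - (N / 3 : ℝ) * ∫ θ in (0 : ℝ)..(2 * Real.pi), ∫ r in Set.Ioi (0 : ℝ),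
        (volume ({p : EuclideanSpace ℝ (Fin 2) |
            |p 0 * Real.cos θ + p 1 * Real.sin θ| ≤ r} ∩ K)).toReal ^ (N - 1) *
        ((μH[1] ({p : EuclideanSpace ℝ (Fin 2) |
            p 0 * Real.cos θ + p 1 * Real.sin θ = r} ∩ K)).toReal) ^ 3 := by
  rw [momentV_formula_dim_two_general hK (by lia), hvol, ENNReal.toReal_one, one_pow, mul_one]
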